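/- Let q be a prime power and 4 ≤ h < k integers, D_1 = { x ∈ 𝔽_q^k \ {0} : (x_1+⋯+x_h)·x_1⋯x_h = 0 }, n = #D_1, and for α ∈ 𝔽_q^k let w(α) = #{ P ∈ D_1 : ⟨α,P⟩ ≠ 0 }. Then: (i) the set of α ∈ 𝔽_q^k having at least one nonzero coordinate among positions h+1, …, k has exactly q^k − q^h elements, and each such α satisfies w(α) = n − q^{k−h−1}(q^h + ψ_h − (q−1)^h) + 1; (ii) for every s ∈ {1, …, h}, every multiset of positive integers {r_1, …, r_l} with r_1 + ⋯ + r_l = s which is of type (i_1, …, i_j), the set of α ∈ 𝔽_q^k with α_m = 0 for all m > h, with exactly h − s zero coordinates among the first h, and whose nonzero coordinates take exactly l distinct values with multiplicity multiset {r_1, …, r_l}, has exactly C(h,s)·(s!/(r_1!⋯r_l!))·(l!/(i_1!⋯i_j!))·C(q−1,l) elements, and each such α satisfies w(α) = n − (q^{k−1} − (q−1)^{h−s}q^{k−h}ψ_s + q^{k−h}A_{r_1,…,r_l,h−s}) + 1. -/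

import Mathlib

/-- `ψ_s = ((q-1)^s + (-1)^s (q-1))/q` (an exact integer division). -/
def psi (q s : ℕ) : ℤ := (((q : ℤ) - 1) ^ s + (-1) ^ s * ((q : ℤ) - 1)) / (q : ℤ)

/-- `φ_s = ((q-1)^s - ψ_s)/(q-1)` (an exact integer division). -/
def phi (q s : ℕ) : ℤ := (((q : ℤ) - 1) ^ s - psi q s) / ((q : ℤ) - 1)

/-- Auxiliary recursion for `A_{r_1,…,r_l}`, taking the list in reversed order
`[r_l, r_{l-1}, …, r_1]`. -/
def Arev (q : ℕ) : List ℕ → ℤ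
  | [] => 0
  | [r] => psi q r
  | r :: rs => psi q rs.sum * phi q r + (-1) ^ r * Arev q rs

/-- `A_{r_1,…,r_l}` for the list `[r_1, …, r_l]`; appending a final entry `t`
(possibly `t = 0`) realizes `A_{r_1,…,r_l,t}`. -/
def Atup (q : ℕ) (l : List ℕ) : ℤ := Arev q l.reverse

open Finset

section Recursion

theorem mul_psi (q s : ℕ) :
    (q : ℤ) * psi q s = ((q : ℤ) - 1) ^ s + (-1) ^ s * ((q : ℤ) - 1) := by
  refine Int.mul_ediv_cancel' ?_
  have hdvd : (q : ℤ) ∣ ((q : ℤ) - 1) ^ s - (-1) ^ s := by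
    simpa using sub_dvd_pow_sub_pow ((q : ℤ) - 1) (-1) s
  have hsplit : ((q : ℤ) - 1) ^ s + (-1) ^ s * ((q : ℤ) - 1)
      = (((q : ℤ) - 1) ^ s - (-1) ^ s) + (q : ℤ) * (-1) ^ s := by ring
  rw [hsplit]
  exact dvd_add hdvd (dvd_mul_right _ _)

theorem mul_phi {q : ℕ} (hq : 1 < q) (s : ℕ) :
    (q : ℤ) * phi q s = ((q : ℤ) - 1) ^ s - (-1) ^ s := by
  have hq0 : (q : ℤ) ≠ 0 := by positivity
  have hq1 : (q : ℤ) - 1 ≠ 0 := by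
    have : (1 : ℤ) < q := by exact_mod_cast hq
    lia
  obtain ⟨c, hc⟩ : (q : ℤ) ∣ ((q : ℤ) - 1) ^ s - (-1) ^ s := by
    simpa using sub_dvd_pow_sub_pow ((q : ℤ) - 1) (-1) s
  have hmul : ((q : ℤ) - 1) ^ s - psi q s = ((q : ℤ) - 1) * c := by
    apply mul_left_cancel₀ hq0
    rw [mul_sub, mul_psi]
    linear_combination ((q : ℤ) - 1) * hc
  rw [hc, phi, hmul, Int.mul_ediv_cancel_left _ hq1]

/-- Closed form of the recursively defined numbers `A`. -/
theorem sq_mul_Arev {q : ℕ} (hq : 1 < q) :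
    ∀ L : List ℕ, L ≠ [] → (q : ℤ) ^ 2 * Arev q L
      = ((q : ℤ) - 1) ^ L.sum + (-1) ^ L.sum * ((q : ℤ) - 1)
        * ((q : ℤ) + 1 + (L.map fun r => (1 - (q : ℤ)) ^ r - 1).sum)
  | [], h => absurd rfl h
  | [r], _ => by
    have hsign : (-1 : ℤ) ^ r * (1 - (q : ℤ)) ^ r = ((q : ℤ) - 1) ^ r := by
      rw [← mul_pow]; ring
    simp only [Arev, List.sum_cons, List.sum_nil, List.map_cons, List.map_nil, add_zero]
    linear_combination (q : ℤ) * mul_psi q r - ((q : ℤ) - 1) * hsign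
  | r :: r' :: rs, _ => by
    have ih := sq_mul_Arev hq (r' :: rs) (by simp)
    have hsign : (-1 : ℤ) ^ r * (1 - (q : ℤ)) ^ r = ((q : ℤ) - 1) ^ r := by
      rw [← mul_pow]; ring
    have hψ := mul_psi q (r' :: rs).sum
    have hφ := mul_phi hq r
    have hmap : ((r :: r' :: rs).map fun r => (1 - (q : ℤ)) ^ r - 1).sum
        = (1 - (q : ℤ)) ^ r - 1 + ((r' :: rs).map fun r => (1 - (q : ℤ)) ^ r - 1).sum := by
      rw [List.map_cons, List.sum_cons]
    rw [Arev, hmap, List.sum_cons (a := r), pow_add, pow_add]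
    · generalize (r' :: rs).sum = S at *
      generalize ((r' :: rs).map fun r => (1 - (q : ℤ)) ^ r - 1).sum = M at *
      linear_combination (q : ℤ) * phi q r * hψ
        + (((q : ℤ) - 1) ^ S + (-1) ^ S * ((q : ℤ) - 1)) * hφ + (-1) ^ r * ih
        - ((q : ℤ) - 1) * (-1) ^ S * hsign
    · simp

theorem sq_mul_Atup {q : ℕ} (hq : 1 < q) (L : List ℕ) (hL : L ≠ []) :
    (q : ℤ) ^ 2 * Atup q L
      = ((q : ℤ) - 1) ^ L.sum + (-1) ^ L.sum * ((q : ℤ) - 1)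
        * ((q : ℤ) + 1 + (L.map fun r => (1 - (q : ℤ)) ^ r - 1).sum) := by
  rw [Atup, sq_mul_Arev hq _ (by simpa using hL), List.map_reverse, List.sum_reverse,
    List.sum_reverse]

end Recursion

section CharacterSums

variable {F : Type*} [Field F] [Fintype F] {J : Type*} [Fintype J] [DecidableEq J]

theorem addChar_map_sum {F J : Type*} [Field F] [Fintype J] (e : AddChar F ℂ) (f : J → F) :
    e (∑ i, f i) = ∏ i, e (f i) :=
  map_prod e.toMonoidHom (fun i => Multiplicative.ofAdd (f i)) univ

open Classical in
theorem exists_sum_addChar_mul (F : Type*) [Field F] [Fintype F] :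
    ∃ e : AddChar F ℂ, ∀ b : F, ∑ t, e (t * b) = if b = 0 then (Fintype.card F : ℂ) else 0 := by
  refine ⟨AddChar.FiniteField.primitiveChar_to_Complex F, fun b => ?_⟩
  exact_mod_cast AddChar.sum_mulShift b
    (AddChar.FiniteField.primitiveChar_to_Complex_isPrimitive F)

open Classical in
theorem sum_nonzero_addChar_mul {e : AddChar F ℂ}
    (he : ∀ b : F, ∑ t, e (t * b) = if b = 0 then (Fintype.card F : ℂ) else 0) (b : F) :
    ∑ y with y ≠ 0, e (b * y) = if b = 0 then (Fintype.card F : ℂ) - 1 else -1 := by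
  have h := he b
  rw [← Finset.sum_filter_add_sum_filter_not univ (fun y : F => y ≠ 0)] at h
  have hzero : ∑ y with ¬ y ≠ 0, e (y * b) = 1 := by
    simp [Finset.sum_filter]
  rw [hzero] at h
  simp only [mul_comm b]
  split_ifs at h ⊢ <;> linear_combination h

open Classical in
theorem card_mul_card_torus_hyperplane (a : J → F) :
    (Fintype.card F : ℤ) * #{y : J → F | (∀ i, y i ≠ 0) ∧ ∑ i, a i * y i = 0}
      = ∑ t : F, ∏ i, if t * a i = 0 then (Fintype.card F : ℤ) - 1 else -1 := by
  obtain ⟨e, he⟩ := exists_sum_addChar_mul F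
  have key : (Fintype.card F : ℂ) * #{y : J → F | (∀ i, y i ≠ 0) ∧ ∑ i, a i * y i = 0}
      = ∑ t : F, ∏ i, if t * a i = 0 then (Fintype.card F : ℂ) - 1 else -1 := by
    calc _ = ∑ y ∈ Fintype.piFinset fun _ : J => {y : F | y ≠ 0},
          ∑ t, e (t * ∑ i, a i * y i) := by
          simp only [he, ← Finset.sum_filter, sum_const, nsmul_eq_mul]
          rw [mul_comm]
          congr 3
          ext y
          simp [Fintype.mem_piFinset]
      _ = _ := by
          rw [sum_comm]
          refine sum_congr rfl fun t _ => ?_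
          simp only [← sum_nonzero_addChar_mul he, prod_univ_sum, mul_sum, ← mul_assoc,
            addChar_map_sum]
  exact_mod_cast key

open Classical in
theorem sq_card_mul_card_torus_codim_two (a : J → F) :
    (Fintype.card F : ℤ) ^ 2
        * #{y : J → F | (∀ i, y i ≠ 0) ∧ ∑ i, a i * y i = 0 ∧ ∑ i, y i = 0}
      = ∑ t : F, ∑ u : F, ∏ i, if t * a i + u = 0 then (Fintype.card F : ℤ) - 1 else -1 := by
  obtain ⟨e, he⟩ := exists_sum_addChar_mul F
  have key : (Fintype.card F : ℂ) ^ 2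
        * #{y : J → F | (∀ i, y i ≠ 0) ∧ ∑ i, a i * y i = 0 ∧ ∑ i, y i = 0}
      = ∑ t : F, ∑ u : F, ∏ i, if t * a i + u = 0 then (Fintype.card F : ℂ) - 1 else -1 := by
    calc _ = ∑ y ∈ Fintype.piFinset fun _ : J => {y : F | y ≠ 0},
          (∑ t, e (t * ∑ i, a i * y i)) * ∑ u, e (u * ∑ i, y i) := by
          simp only [he, ite_mul, mul_ite, mul_zero, zero_mul, ← Finset.sum_filter, sum_const,
            nsmul_eq_mul, Finset.filter_filter]
          rw [mul_comm, sq]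
          congr 3
          ext y
          simp [Fintype.mem_piFinset]
          tauto
      _ = _ := by
          simp only [sum_mul_sum]
          rw [sum_comm]
          refine sum_congr rfl fun t _ => ?_
          rw [sum_comm]
          refine sum_congr rfl fun u _ => ?_
          simp only [← sum_nonzero_addChar_mul he, prod_univ_sum, mul_sum, ← mul_assoc,
            addChar_map_sum, add_mul, AddChar.map_add_eq_mul, prod_mul_distrib]
  exact_mod_cast key

open Classical in
theorem prod_ite_const {J : Type*} [Fintype J] (p : J → Prop) (x y : ℤ) :
    ∏ i, (if p i then x else y) = x ^ #{i | p i} * y ^ #{i | ¬ p i} := by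
  rw [prod_ite, prod_const, prod_const]

open Classical in
/-- The number of zeros with nonzero coordinates of a linear form with `s` nonzero coefficients. -/
theorem card_torus_hyperplane (a : J → F) :
    (#{y : J → F | (∀ i, y i ≠ 0) ∧ ∑ i, a i * y i = 0} : ℤ)
      = ((Fintype.card F : ℤ) - 1) ^ #{i | a i = 0} * psi (Fintype.card F) #{i | a i ≠ 0} := by
  have hq : (Fintype.card F : ℤ) ≠ 0 := by exact_mod_cast Fintype.card_ne_zero
  apply mul_left_cancel₀ hq
  rw [card_mul_card_torus_hyperplane, mul_left_comm, mul_psi,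
    ← Finset.add_sum_erase _ _ (mem_univ (0 : F))]
  have hne : ∀ t ∈ univ.erase (0 : F),
      (∏ i, if t * a i = 0 then (Fintype.card F : ℤ) - 1 else -1)
        = ((Fintype.card F : ℤ) - 1) ^ #{i | a i = 0} * (-1) ^ #{i | a i ≠ 0} := by
    intro t ht
    simp [(mem_erase.mp ht).1, prod_ite_const]
  rw [sum_congr rfl hne, sum_const, card_erase_of_mem (mem_univ _), card_univ, nsmul_eq_mul,
    Nat.cast_sub Fintype.card_pos]
  have hJ : Fintype.card J = #{i | a i = 0} + #{i | a i ≠ 0} :=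
    (card_filter_add_card_filter_not _).symm
  simp only [zero_mul, if_true, prod_const, card_univ, hJ, pow_add]
  push_cast
  ring

open Classical in
theorem sq_card_mul_card_torus_codim_two_eq (a : J → F) :
    (Fintype.card F : ℤ) ^ 2
        * #{y : J → F | (∀ i, y i ≠ 0) ∧ ∑ i, a i * y i = 0 ∧ ∑ i, y i = 0}
      = ((Fintype.card F : ℤ) - 1) ^ Fintype.card J
        + (-1) ^ Fintype.card J * ((Fintype.card F : ℤ) - 1)
          * ((Fintype.card F : ℤ) + 1
            + ∑ w : F, ((1 - (Fintype.card F : ℤ)) ^ #{i | a i = w} - 1)) := by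
  rw [sq_card_mul_card_torus_codim_two, ← Finset.add_sum_erase _ _ (mem_univ (0 : F))]
  have hprod : ∀ w : F, (∏ i, if a i = w then (Fintype.card F : ℤ) - 1 else -1)
      = (-1) ^ Fintype.card J * (1 - (Fintype.card F : ℤ)) ^ #{i | a i = w} := by
    intro w
    have hJ : Fintype.card J = #{i | a i = w} + #{i | a i ≠ w} :=
      (card_filter_add_card_filter_not _).symm
    rw [prod_ite_const, hJ, pow_add, mul_right_comm, ← mul_pow]
    ring
  have hne : ∀ t ∈ univ.erase (0 : F),
      (∑ u : F, ∏ i, if t * a i + u = 0 then (Fintype.card F : ℤ) - 1 else -1)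
        = ∑ w : F, (-1) ^ Fintype.card J * (1 - (Fintype.card F : ℤ)) ^ #{i | a i = w} := by
    intro t ht
    have ht0 := (mem_erase.mp ht).1
    rw [← Equiv.sum_comp (Equiv.mulLeft₀ (-t) (neg_ne_zero.mpr ht0))]
    refine sum_congr rfl fun w _ => ?_
    rw [← hprod]
    refine prod_congr rfl fun i _ => ?_
    simp [← sub_eq_add_neg, ← mul_sub, ht0, sub_eq_zero]
  rw [sum_congr rfl hne, sum_const, card_erase_of_mem (mem_univ _), card_univ, nsmul_eq_mul,
    Nat.cast_sub Fintype.card_pos, ← Finset.add_sum_erase _ _ (mem_univ (0 : F))]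
  have hu : ∀ u ∈ univ.erase (0 : F),
      (∏ i : J, if 0 * a i + u = 0 then (Fintype.card F : ℤ) - 1 else -1)
        = (-1) ^ Fintype.card J := by
    intro u hu
    simp [(mem_erase.mp hu).1]
  rw [sum_congr rfl hu, sum_const, card_erase_of_mem (mem_univ _), card_univ, nsmul_eq_mul,
    Nat.cast_sub Fintype.card_pos]
  simp only [← mul_sum, sum_sub_distrib, sum_const, card_univ, nsmul_eq_mul]
  simp
  ring

end CharacterSums

section Hyperplanes

variable {F : Type*} [Field F] [Fintype F] {J : Type*} [Fintype J] [DecidableEq J]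

open Classical in
theorem card_affine_hyperplane (b : J → F) {i : J} (hi : b i ≠ 0) (c : F) :
    #{z : J → F | ∑ i, b i * z i = c} = Fintype.card F ^ (Fintype.card J - 1) := by
  let f : (J → F) →+ F := (∑ i, b i • LinearMap.proj (R := F) (φ := fun _ : J => F) i)
  have hf : ∀ z, f z = ∑ i, b i * z i := fun z => by simp [f]
  have hsurj : Function.Surjective f := fun c => ⟨Pi.single i (c / b i), by
    simp [hf, Pi.single_apply, mul_div_cancel₀ c hi]⟩
  have hfib : ∀ c', #{z | f z = c'} = #{z | f z = c} := fun c' =>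
    AddMonoidHom.card_fiber_eq_of_mem_range f (hsurj c') (hsurj c)
  have htotal : Fintype.card F ^ Fintype.card J = Fintype.card F * #{z | f z = c} := by
    rw [← Fintype.card_fun, ← card_univ,
      card_eq_sum_card_fiberwise (f := f) (t := univ) (fun _ _ => by simp),
      sum_congr rfl fun c' _ => hfib c', sum_const, card_univ, smul_eq_mul]
  simp only [← hf]
  apply Nat.eq_of_mul_eq_mul_left (Fintype.card_pos (α := F))
  rw [← htotal, ← pow_succ', Nat.sub_add_cancel]
  exact Fintype.card_pos_iff.mpr ⟨i⟩

open Classical in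
/-- Counting the complement of the zero set of `(∑ yᵢ) ∏ yᵢ` inside a set. -/
theorem card_sum_mul_prod_eq_zero (p : (J → F) → Prop) :
    (#{y : J → F | (∑ i, y i) * ∏ i, y i = 0 ∧ p y} : ℤ)
      = #{y : J → F | p y} - #{y : J → F | (∀ i, y i ≠ 0) ∧ p y}
        + #{y : J → F | (∀ i, y i ≠ 0) ∧ p y ∧ ∑ i, y i = 0} := by
  have hsplit := card_filter_add_card_filter_not (s := {y : J → F | p y})
    (fun y => (∑ i, y i) * ∏ i, y i = 0)
  have hsplit' := card_filter_add_card_filter_not (s := {y : J → F | (∀ i, y i ≠ 0) ∧ p y})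
    (fun y => ∑ i, y i = 0)
  have hcompl : #{y ∈ ({y : J → F | p y} : Finset _) | ¬ (∑ i, y i) * ∏ i, y i = 0}
      = #{y ∈ ({y : J → F | (∀ i, y i ≠ 0) ∧ p y} : Finset _) | ¬ ∑ i, y i = 0} := by
    congr 1
    ext y
    simp [prod_eq_zero_iff]
    tauto
  have hfst : #{y ∈ ({y : J → F | p y} : Finset _) | (∑ i, y i) * ∏ i, y i = 0}
      = #{y : J → F | (∑ i, y i) * ∏ i, y i = 0 ∧ p y} := by
    congr 1
    ext y
    simp [and_comm]
  have hsnd : #{y ∈ ({y : J → F | (∀ i, y i ≠ 0) ∧ p y} : Finset _) | ∑ i, y i = 0}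
      = #{y : J → F | (∀ i, y i ≠ 0) ∧ p y ∧ ∑ i, y i = 0} := by
    congr 1
    ext y
    simp [and_assoc]
  omega

end Hyperplanes

section Fibers

variable {J K : Type*} [Fintype J]

open Classical in
theorem exists_perm_comp_eq {f g : J → K} (h : ∀ x, #{i | f i = x} = #{i | g i = x}) :
    ∃ σ : Equiv.Perm J, g ∘ σ = f := by
  have e : ∀ x, {i // f i = x} ≃ {i // g i = x} := fun x =>
    Fintype.equivOfCardEq (by simpa [Fintype.card_subtype] using h x)
  refine ⟨(Equiv.sigmaFiberEquiv f).symm.trans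
    ((Equiv.sigmaCongrRight e).trans (Equiv.sigmaFiberEquiv g)), ?_⟩
  ext i
  exact (e (f i) ⟨i, rfl⟩).2

open Classical in
/-- The number of maps with prescribed sizes of the fibers. -/
theorem card_fun_fibers_mul [DecidableEq J] [Fintype K] (c : K → ℕ) (hc : ∑ x, c x = Fintype.card J) :
    #{f : J → K | ∀ x, #{i | f i = x} = c x} * ∏ x, (c x).factorial
      = (Fintype.card J).factorial := by
  obtain ⟨f₀, hf₀⟩ : ∃ f₀ : J → K, ∀ x, #{i | f₀ i = x} = c x := by
    have e : J ≃ Σ x, Fin (c x) := Fintype.equivOfCardEq (by simp [hc])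
    refine ⟨fun i => (e i).1, fun x => ?_⟩
    rw [← Fintype.card_subtype, Fintype.card_congr
      ((e.subtypeEquiv fun _ => Iff.rfl).trans (Equiv.sigmaSubtype (β := fun x => Fin (c x)) x)),
      Fintype.card_fin]
  have hcount := card_mul_eq_card_mul
    (s := ({f : J → K | ∀ x, #{i | f i = x} = c x} : Finset _))
    (t := (univ : Finset (Equiv.Perm J))) (m := ∏ x, (c x).factorial) (n := 1)
    (fun f (σ : Equiv.Perm J) => f₀ ∘ σ = f) (fun f hf => ?_) (fun σ _ => ?_)
  · rw [hcount, mul_one, card_univ, Fintype.card_perm]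
  · obtain ⟨τ, rfl⟩ := exists_perm_comp_eq (f := f) (g := f₀) fun x => by
      rw [hf₀, (mem_filter.mp hf).2 x]
    have hstab := DomMulAct.stabilizer_card f₀
    simp only [Fintype.card_subtype, hf₀] at hstab
    rw [← hstab]
    refine card_bij (fun σ _ => σ * τ⁻¹) ?_ ?_ ?_
    · intro σ hσ
      simp only [bipartiteAbove, mem_filter, mem_univ, true_and] at hσ ⊢
      rw [Equiv.Perm.coe_mul, ← Function.comp_assoc, hσ]
      ext i
      simp
    · intro σ _ σ' _ h
      simpa using h
    · intro σ hσ
      refine ⟨σ * τ, ?_, by simp⟩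
      simp only [bipartiteAbove, mem_filter, mem_univ, true_and] at hσ ⊢
      rw [Equiv.Perm.coe_mul, ← Function.comp_assoc, hσ]
  · rw [card_eq_one]
    refine ⟨f₀ ∘ σ, ?_⟩
    ext f
    simp only [bipartiteBelow, mem_filter, mem_univ, true_and, mem_singleton]
    refine ⟨fun h => h.2.symm, ?_⟩
    rintro rfl
    refine ⟨fun x => ?_, rfl⟩
    rw [← hf₀ x]
    exact card_equiv σ (by simp)

end Fibers

section ValueProfiles

variable {F : Type*} [Field F] {J : Type*} {l : ℕ}

/-- The vector `a` has `t` zero coordinates, and its nonzero coordinates take the distinct values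
`β m` with multiplicities `r m`. -/
def HasProfile (t : ℕ) (r : Fin l → ℕ) (β : Fin l → F) (a : J → F) : Prop :=
  Nat.card {i // a i = 0} = t ∧ Function.Injective β ∧ (∀ m, β m ≠ 0) ∧
    (∀ i, a i ≠ 0 → ∃ m, a i = β m) ∧ ∀ m, Nat.card {i // a i = β m} = r m

/-- The multiplicity of each field element prescribed by `HasProfile`. -/
noncomputable def profileCount (t : ℕ) (r : Fin l → ℕ) (β : Fin l → F) : F → ℕ :=
  Function.extend (fun o : Option (Fin l) => o.elim 0 β) (fun o => o.elim t r) 0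

theorem injective_option_elim_zero {F : Type*} [Zero F] {β : Fin l → F}
    (hβ : Function.Injective β) (h0 : ∀ m, β m ≠ 0) :
    Function.Injective (fun o : Option (Fin l) => o.elim 0 β) := by
  rintro (_ | m) (_ | m') h
  · rfl
  · exact absurd h.symm (h0 m')
  · exact absurd h (h0 m)
  · exact congrArg some (hβ h)

open Classical in
theorem hasProfile_iff [Fintype J] (t : ℕ) (r : Fin l → ℕ) {β : Fin l → F} (hβ : Function.Injective β)
    (h0 : ∀ m, β m ≠ 0) (a : J → F) :
    HasProfile t r β a ↔ ∀ x, #{i | a i = x} = profileCount t r β x := by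
  have hinj := injective_option_elim_zero hβ h0
  have hnone : profileCount t r β 0 = t := hinj.extend_apply _ _ none
  have hsome : ∀ m, profileCount t r β (β m) = r m := fun m => hinj.extend_apply _ _ (some m)
  have hother : ∀ x, x ≠ 0 → (∀ m, x ≠ β m) → profileCount t r β x = 0 := by
    intro x hx hxβ
    refine Function.extend_apply' _ _ _ ?_
    rintro ⟨_ | m, rfl⟩
    · exact hx rfl
    · exact hxβ m rfl
  simp only [HasProfile, Nat.card_eq_fintype_card, Fintype.card_subtype]
  constructor
  · rintro ⟨ht, -, -, hcov, hr⟩ x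
    by_cases hx : x = 0
    · rw [hx, hnone, ht]
    by_cases hxβ : ∃ m, x = β m
    · obtain ⟨m, rfl⟩ := hxβ
      rw [hsome, hr]
    · push Not at hxβ
      rw [hother x hx hxβ, card_eq_zero, filter_eq_empty_iff]
      rintro i - rfl
      obtain ⟨m, hm⟩ := hcov i hx
      exact hxβ m hm
  · intro h
    refine ⟨by rw [h, hnone], hβ, h0, fun i hi => ?_, fun m => by rw [h, hsome]⟩
    by_contra! hne
    have hzero := h (a i)
    rw [hother _ hi hne, card_eq_zero, filter_eq_empty_iff] at hzero
    exact hzero (mem_univ i) rfl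

theorem sum_profileCount [Fintype F] {M : Type*} [AddCommMonoid M] (t : ℕ) (r : Fin l → ℕ) {β : Fin l → F}
    (hβ : Function.Injective β) (h0 : ∀ m, β m ≠ 0) (g : ℕ → M) (hg : g 0 = 0) :
    ∑ x, g (profileCount t r β x) = g t + ∑ m, g (r m) := by
  have hinj := injective_option_elim_zero hβ h0
  rw [← Fintype.sum_of_injective _ hinj (fun o : Option (Fin l) => g (o.elim t r))
    (fun x => g (profileCount t r β x)), Fintype.sum_option]
  · rfl
  · intro x hx
    rw [profileCount, Function.extend_apply' _ _ _ (by simpa using hx)]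
    exact hg
  · intro o
    rw [profileCount, hinj.extend_apply]

theorem prod_profileCount [Fintype F] {M : Type*} [CommMonoid M] (t : ℕ) (r : Fin l → ℕ) {β : Fin l → F}
    (hβ : Function.Injective β) (h0 : ∀ m, β m ≠ 0) (g : ℕ → M) (hg : g 0 = 1) :
    ∏ x, g (profileCount t r β x) = g t * ∏ m, g (r m) :=
  sum_profileCount (M := Additive M) t r hβ h0 g hg

open Classical in
theorem card_hasProfile_mul [Fintype F] [Fintype J] [DecidableEq J] (t : ℕ) (r : Fin l → ℕ)
    (ht : t + ∑ m, r m = Fintype.card J)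
    {β : Fin l → F} (hβ : Function.Injective β) (h0 : ∀ m, β m ≠ 0) :
    #{a : J → F | HasProfile t r β a} * (t.factorial * ∏ m, (r m).factorial)
      = (Fintype.card J).factorial := by
  have h := card_fun_fibers_mul (J := J) (profileCount t r β)
    ((sum_profileCount t r hβ h0 id rfl).trans ht)
  rw [prod_profileCount t r hβ h0 Nat.factorial rfl] at h
  simpa only [hasProfile_iff t r hβ h0] using h

open Classical in
/-- The permutations preserving the multiplicities parametrize the orderings of the values. -/
theorem card_profile_orderings [Fintype F] {t : ℕ} {r : Fin l → ℕ} (hr : ∀ m, 1 ≤ r m) {β : Fin l → F}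
    {a : J → F} (ha : HasProfile t r β a) :
    #{γ : Fin l → F | HasProfile t r γ a} = #{σ : Equiv.Perm (Fin l) | r ∘ σ = r} := by
  symm
  obtain ⟨ht, hβ, h0, hcov, hcard⟩ := ha
  refine card_bij (fun σ _ => β ∘ σ) ?_ ?_ ?_
  · intro σ hσ
    simp only [mem_filter, mem_univ, true_and] at hσ ⊢
    refine ⟨ht, hβ.comp σ.injective, fun m => h0 _, fun i hi => ?_, fun m => ?_⟩
    · obtain ⟨m, hm⟩ := hcov i hi
      exact ⟨σ.symm m, by simp [hm]⟩
    · exact (hcard (σ m)).trans (congrFun hσ m)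
  · intro σ _ τ _ h
    ext m
    exact congrArg Fin.val (hβ (congrFun h m))
  · intro γ hγ
    simp only [mem_filter, mem_univ, true_and] at hγ
    obtain ⟨-, hγinj, hγ0, -, hγcard⟩ := hγ
    have hrange : ∀ m, ∃ m', γ m = β m' := by
      intro m
      have hpos : 0 < Nat.card {i // a i = γ m} := by rw [hγcard]; exact hr m
      obtain ⟨⟨i, hi⟩⟩ := (Nat.card_pos_iff.mp hpos).1
      rw [← hi]
      exact hcov i (by rw [hi]; exact hγ0 m)
    choose τ hτ using hrange
    have hτinj : Function.Injective τ := fun m m' h => hγinj (by rw [hτ, hτ, h])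
    refine ⟨Equiv.ofBijective τ (Finite.injective_iff_bijective.mp hτinj), ?_, ?_⟩
    · simp only [mem_filter, mem_univ, true_and]
      ext m
      simp only [Function.comp_apply, Equiv.ofBijective_apply]
      rw [← hcard, ← hγcard, hτ]
    · ext m
      simp [hτ]

theorem card_perm_preserving {l j : ℕ} (r : Fin l → ℕ) (ι v : Fin j → ℕ)
    (hv : Function.Injective v) (hrv : ∀ m, ∃ t, r m = v t)
    (hι : ∀ t, ι t = Nat.card {m // r m = v t}) :
    #{σ : Equiv.Perm (Fin l) | r ∘ σ = r} = ∏ t, (ι t).factorial := by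
  choose c hc using hrv
  have hstab := DomMulAct.stabilizer_card c
  have hcomp : ∀ σ : Equiv.Perm (Fin l), r ∘ σ = r ↔ c ∘ σ = c := fun σ => by
    simp only [funext_iff, Function.comp_apply, hc, hv.eq_iff]
  have hfib : ∀ t, ι t = Fintype.card {m // c m = t} := fun t => by
    simp only [hι, hc, hv.eq_iff, Nat.card_eq_fintype_card]
  simp only [hcomp, hfib]
  rw [← hstab, Fintype.card_subtype]

open Classical in
theorem card_injective_nonzero [Fintype F] (l : ℕ) :
    #{β : Fin l → F | Function.Injective β ∧ ∀ m, β m ≠ 0}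
      = (Fintype.card F - 1).descFactorial l := by
  have hcard := Fintype.card_embedding_eq (α := Fin l) (β := {x : F // x ≠ 0})
  rw [Fintype.card_fin, Fintype.card_subtype_compl, Fintype.card_subtype_eq] at hcard
  rw [← hcard, ← card_univ]
  symm
  refine card_bij (fun e _ m => (e m : F)) ?_ ?_ ?_
  · intro e _
    simp only [mem_filter, mem_univ, true_and]
    exact ⟨Subtype.val_injective.comp e.injective, fun m => (e m).2⟩
  · intro e _ e' _ h
    ext m
    exact congrFun h m
  · intro β hβ
    simp only [mem_filter, mem_univ, true_and] at hβ
    exact ⟨⟨fun m => ⟨β m, hβ.2 m⟩, fun m m' h => hβ.1 (congrArg Subtype.val h)⟩, mem_univ _, rfl⟩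

open Classical in
theorem card_exists_hasProfile [Fintype F] [Fintype J] [DecidableEq J] {s : ℕ}
    (hs : s ≤ Fintype.card J) {r : Fin l → ℕ}
    (hr : ∀ m, 1 ≤ r m) (hsum : ∑ m, r m = s) {j : ℕ} {ι v : Fin j → ℕ}
    (hv : Function.Injective v) (hrv : ∀ m, ∃ t, r m = v t)
    (hι : ∀ t, ι t = Nat.card {m // r m = v t}) :
    #{a : J → F | ∃ β, HasProfile (Fintype.card J - s) r β a}
      = (Fintype.card J).choose s * (s.factorial / ∏ m, (r m).factorial)
        * (l.factorial / ∏ t, (ι t).factorial) * (Fintype.card F - 1).choose l := by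
  have hιsum : ∑ t, ι t = l := by
    choose c hc using hrv
    have hfib : ∀ t, ι t = #{m | c m = t} := fun t => by
      simp only [hι, hc, hv.eq_iff, Nat.card_eq_fintype_card, Fintype.card_subtype]
    simp only [hfib]
    rw [← card_eq_sum_card_fiberwise (fun _ _ => by simp), card_univ, Fintype.card_fin]
  have hdvdr : ∏ m, (r m).factorial ∣ s.factorial := by
    rw [← hsum]; exact Nat.prod_factorial_dvd_factorial_sum _ _
  have hdvdι : ∏ t, (ι t).factorial ∣ l.factorial := by
    conv_rhs => rw [← hιsum]
    exact Nat.prod_factorial_dvd_factorial_sum _ _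
  obtain ⟨x, hx⟩ := hdvdr
  obtain ⟨y, hy⟩ := hdvdι
  have hrpos : 0 < ∏ m, (r m).factorial := prod_pos fun _ _ => Nat.factorial_pos _
  have hιpos : 0 < ∏ t, (ι t).factorial := prod_pos fun _ _ => Nat.factorial_pos _
  have hcount := card_mul_eq_card_mul
    (s := ({a : J → F | ∃ β, HasProfile (Fintype.card J - s) r β a} : Finset _))
    (t := ({β : Fin l → F | Function.Injective β ∧ ∀ m, β m ≠ 0} : Finset _))
    (m := ∏ t, (ι t).factorial) (n := (Fintype.card J).choose s * x)
    (fun a β => HasProfile (Fintype.card J - s) r β a) (fun a ha => ?_) (fun β hβ => ?_)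
  · rw [card_injective_nonzero, Nat.descFactorial_eq_factorial_mul_choose] at hcount
    rw [hx, hy, Nat.mul_div_cancel_left _ hrpos, Nat.mul_div_cancel_left _ hιpos]
    apply Nat.eq_of_mul_eq_mul_right hιpos
    rw [hcount, hy]
    ring
  · obtain ⟨β, hβ⟩ := (mem_filter.mp ha).2
    rw [← card_perm_preserving r ι v hv hrv hι, ← card_profile_orderings hr hβ]
    congr 1
    ext γ
    simp only [bipartiteAbove, mem_filter, mem_univ, true_and, and_iff_right_iff_imp]
    exact fun h => ⟨h.2.1, h.2.2.1⟩
  · simp only [mem_filter, mem_univ, true_and] at hβ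
    have hprof := card_hasProfile_mul (J := J) (Fintype.card J - s) r (by omega) hβ.1 hβ.2
    have hset : (({a : J → F | ∃ β, HasProfile (Fintype.card J - s) r β a} : Finset _).bipartiteBelow
        (fun a β => HasProfile (Fintype.card J - s) r β a) β)
        = ({a : J → F | HasProfile (Fintype.card J - s) r β a} : Finset _) := by
      ext a
      simp only [bipartiteBelow, mem_filter, mem_univ, true_and, and_iff_right_iff_imp]
      exact fun h => ⟨β, h⟩
    rw [hset]
    apply Nat.eq_of_mul_eq_mul_right
      (Nat.mul_pos (Nat.factorial_pos (Fintype.card J - s)) hrpos)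
    rw [hprof, ← Nat.choose_mul_factorial_mul_factorial hs, hx]
    ring

end ValueProfiles

section HeadCounts

variable {F : Type*} [Field F] [Fintype F] {J : Type*} [Fintype J] [DecidableEq J]

open Classical in
theorem card_sum_mul_prod_zeros :
    (#{y : J → F | (∑ i, y i) * ∏ i, y i = 0} : ℤ)
      = (Fintype.card F : ℤ) ^ Fintype.card J + psi (Fintype.card F) (Fintype.card J)
        - ((Fintype.card F : ℤ) - 1) ^ Fintype.card J := by
  have hE := card_sum_mul_prod_eq_zero (J := J) (F := F) (fun _ => True)
  have hψ := card_torus_hyperplane (J := J) (F := F) (fun _ => 1)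
  have hall : #{y : J → F | ∀ i, y i ≠ 0} = (Fintype.card F - 1) ^ Fintype.card J := by
    have hpi : ({y : J → F | ∀ i, y i ≠ 0} : Finset _)
        = Fintype.piFinset fun _ => univ.erase 0 := by
      ext y; simp [Fintype.mem_piFinset]
    rw [hpi, Fintype.card_piFinset]
    simp [card_erase_of_mem]
  simp only [and_true, true_and, one_mul, one_ne_zero, filter_false, card_empty, pow_zero,
    ne_eq, not_false_eq_true, filter_true, card_univ, Fintype.card_fun] at hE hψ hall
  rw [hE, hψ, hall]
  push_cast [Nat.cast_sub (Fintype.card_pos (α := F))]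
  ring

open Classical in
theorem card_sum_mul_prod_zeros_of_hasProfile {l s : ℕ} {r : Fin l → ℕ} {β : Fin l → F}
    {a : J → F} (hs1 : 1 ≤ s) (hs : s ≤ Fintype.card J) (hsum : ∑ m, r m = s)
    (hprof : HasProfile (Fintype.card J - s) r β a) :
    (#{y : J → F | (∑ i, y i) * ∏ i, y i = 0 ∧ ∑ i, a i * y i = 0} : ℤ)
      = (Fintype.card F : ℤ) ^ (Fintype.card J - 1)
        - ((Fintype.card F : ℤ) - 1) ^ (Fintype.card J - s) * psi (Fintype.card F) s
        + Atup (Fintype.card F) (List.ofFn r ++ [Fintype.card J - s]) := by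
  obtain ⟨hzero, hβ, h0, -, -⟩ := id hprof
  have hcounts := (hasProfile_iff (Fintype.card J - s) r hβ h0 a).mp hprof
  rw [Nat.card_eq_fintype_card, Fintype.card_subtype] at hzero
  have hsplit := card_filter_add_card_filter_not (s := univ) (fun i => a i = 0)
  rw [hzero, card_univ] at hsplit
  have hsupp : #{i | a i ≠ 0} = s := by
    change #{i | ¬ a i = 0} = s
    omega
  obtain ⟨i, hi⟩ : ∃ i, a i ≠ 0 := by
    obtain ⟨i, hi⟩ := card_pos.mp (show 0 < #{i | a i ≠ 0} by omega)
    exact ⟨i, (mem_filter.mp hi).2⟩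
  have hA : (#{y : J → F | (∀ i, y i ≠ 0) ∧ ∑ i, a i * y i = 0 ∧ ∑ i, y i = 0} : ℤ)
      = Atup (Fintype.card F) (List.ofFn r ++ [Fintype.card J - s]) := by
    have hq0 : (Fintype.card F : ℤ) ^ 2 ≠ 0 := by
      have : Fintype.card F ≠ 0 := Fintype.card_ne_zero
      positivity
    apply mul_left_cancel₀ hq0
    rw [sq_card_mul_card_torus_codim_two_eq, sq_mul_Atup Fintype.one_lt_card _ (by simp)]
    simp only [hcounts]
    rw [sum_profileCount _ r hβ h0 (fun c => (1 - (Fintype.card F : ℤ)) ^ c - 1) (by simp)]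
    have hlen : (List.ofFn r ++ [Fintype.card J - s]).sum = Fintype.card J := by
      simp [List.sum_ofFn, hsum, hs]
    rw [hlen, List.map_append, List.sum_append, List.map_ofFn, List.sum_ofFn]
    simp only [List.map_cons, List.map_nil, List.sum_cons, List.sum_nil, Function.comp_apply]
    ring
  rw [card_sum_mul_prod_eq_zero fun y : J → F => ∑ i, a i * y i = 0, hA, card_torus_hyperplane,
    hzero, hsupp, card_affine_hyperplane a hi]
  push_cast
  ring

end HeadCounts

section Weights

variable {F : Type*} [Field F] [Fintype F] {h d : ℕ}

open Classical in
theorem card_nonorthogonal_eq (α : Fin (h + d) → F) :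
    (Nat.card {P : Fin (h + d) → F // (P ≠ 0 ∧
        (∑ i : Fin h, P (Fin.castAdd d i)) * ∏ i : Fin h, P (Fin.castAdd d i) = 0) ∧
          ∑ i, α i * P i ≠ 0} : ℤ)
      = Nat.card {P : Fin (h + d) → F // P ≠ 0 ∧
          (∑ i : Fin h, P (Fin.castAdd d i)) * ∏ i : Fin h, P (Fin.castAdd d i) = 0}
        - #{P : Fin (h + d) → F |
          (∑ i : Fin h, P (Fin.castAdd d i)) * ∏ i : Fin h, P (Fin.castAdd d i) = 0 ∧
            ∑ i, α i * P i = 0} + 1 := by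
  simp only [Nat.card_eq_fintype_card, Fintype.card_subtype]
  set E : Finset (Fin (h + d) → F) := {P : Fin (h + d) → F |
    (∑ i : Fin h, P (Fin.castAdd d i)) * ∏ i : Fin h, P (Fin.castAdd d i) = 0} with hE
  have h0 : (0 : Fin (h + d) → F) ∈ E := by simp [hE]
  have hD : ({P : Fin (h + d) → F | P ≠ 0 ∧
      (∑ i : Fin h, P (Fin.castAdd d i)) * ∏ i : Fin h, P (Fin.castAdd d i) = 0} : Finset _)
      = E.erase 0 := by
    ext P; simp [hE]
  have hw : ({P : Fin (h + d) → F | (P ≠ 0 ∧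
      (∑ i : Fin h, P (Fin.castAdd d i)) * ∏ i : Fin h, P (Fin.castAdd d i) = 0) ∧
        ∑ i, α i * P i ≠ 0} : Finset _) = {P ∈ E | ¬ ∑ i, α i * P i = 0} := by
    ext P
    simp only [hE, mem_filter, mem_univ, true_and, ne_eq, and_assoc, and_iff_right_iff_imp]
    rintro ⟨-, hP⟩ rfl
    simp at hP
  have hz : ({P : Fin (h + d) → F |
      (∑ i : Fin h, P (Fin.castAdd d i)) * ∏ i : Fin h, P (Fin.castAdd d i) = 0 ∧
        ∑ i, α i * P i = 0} : Finset _) = {P ∈ E | ∑ i, α i * P i = 0} := by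
    ext P; simp [hE]
  have hsplit := card_filter_add_card_filter_not (s := E) (fun P => ∑ i, α i * P i = 0)
  have herase := card_erase_add_one h0
  rw [hD, hw, hz]
  omega

open Classical in
theorem card_filter_head_eq_sum (α : Fin (h + d) → F) (p : (Fin h → F) → Prop) :
    #{P : Fin (h + d) → F | p (fun i => P (Fin.castAdd d i)) ∧ ∑ i, α i * P i = 0}
      = ∑ y with p y, #{z : Fin d → F | ∑ i, α (Fin.natAdd h i) * z i
        = - ∑ i, α (Fin.castAdd d i) * y i} := by
  rw [card_eq_sum_card_fiberwise (f := fun P i => P (Fin.castAdd d i))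
    (t := ({y : Fin h → F | p y} : Finset _)) (fun P hP => by simpa using (mem_filter.mp hP).2.1)]
  refine sum_congr rfl fun y hy => ?_
  refine card_bij (fun P _ i => P (Fin.natAdd h i)) ?_ ?_ ?_
  · intro P hP
    simp only [mem_filter, mem_univ, true_and, Fin.sum_univ_add] at hP ⊢
    rw [← hP.2]
    linear_combination hP.1.2
  · intro P hP Q hQ hPQ
    simp only [mem_filter, mem_univ, true_and] at hP hQ
    ext i
    refine Fin.addCases (fun i => ?_) (fun i => ?_) i
    · exact congrFun (hP.2.trans hQ.2.symm) i
    · exact congrFun hPQ i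
  · intro z hz
    refine ⟨Fin.append y z, ?_, by simp⟩
    simp only [mem_filter, mem_univ, true_and, Fin.sum_univ_add, Fin.append_left,
      Fin.append_right] at hy hz ⊢
    exact ⟨⟨hy, by rw [hz]; ring⟩, trivial⟩

open Classical in
theorem card_zeros_of_tail_ne_zero (α : Fin (h + d) → F) {i : Fin d}
    (hi : α (Fin.natAdd h i) ≠ 0) :
    (#{P : Fin (h + d) → F |
          (∑ i : Fin h, P (Fin.castAdd d i)) * ∏ i : Fin h, P (Fin.castAdd d i) = 0 ∧
            ∑ i, α i * P i = 0} : ℤ)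
      = (Fintype.card F : ℤ) ^ (d - 1) * ((Fintype.card F : ℤ) ^ h + psi (Fintype.card F) h
        - ((Fintype.card F : ℤ) - 1) ^ h) := by
  rw [card_filter_head_eq_sum α (fun y => (∑ i, y i) * ∏ i, y i = 0)]
  simp only [card_affine_hyperplane (fun i => α (Fin.natAdd h i)) hi, sum_const, smul_eq_mul,
    Fintype.card_fin]
  push_cast
  rw [card_sum_mul_prod_zeros, Fintype.card_fin, mul_comm]

open Classical in
theorem card_zeros_of_hasProfile {l s : ℕ} {r : Fin l → ℕ} {β : Fin l → F}
    (α : Fin (h + d) → F) (hα : ∀ i, α (Fin.natAdd h i) = 0) (hs1 : 1 ≤ s) (hs : s ≤ h)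
    (hsum : ∑ m, r m = s) (hprof : HasProfile (h - s) r β fun i => α (Fin.castAdd d i)) :
    (#{P : Fin (h + d) → F |
          (∑ i : Fin h, P (Fin.castAdd d i)) * ∏ i : Fin h, P (Fin.castAdd d i) = 0 ∧
            ∑ i, α i * P i = 0} : ℤ)
      = (Fintype.card F : ℤ) ^ (h + d - 1)
        - ((Fintype.card F : ℤ) - 1) ^ (h - s) * (Fintype.card F : ℤ) ^ d * psi (Fintype.card F) s
        + (Fintype.card F : ℤ) ^ d * Atup (Fintype.card F) (List.ofFn r ++ [h - s]) := by
  set q := Fintype.card F with hq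
  set a : Fin h → F := fun i => α (Fin.castAdd d i) with ha
  have hbase : #{P : Fin (h + d) → F |
          (∑ i : Fin h, P (Fin.castAdd d i)) * ∏ i : Fin h, P (Fin.castAdd d i) = 0 ∧
            ∑ i, α i * P i = 0}
      = q ^ d * #{y : Fin h → F | (∑ i, y i) * ∏ i, y i = 0 ∧ ∑ i, a i * y i = 0} := by
    rw [card_filter_head_eq_sum α (fun y => (∑ i, y i) * ∏ i, y i = 0)]
    have hfib : ∀ y : Fin h → F, #{z : Fin d → F | ∑ i, α (Fin.natAdd h i) * z i
        = - ∑ i, α (Fin.castAdd d i) * y i} = if ∑ i, a i * y i = 0 then q ^ d else 0 := by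
      intro y
      split_ifs with hy
      · simp [hα, hq, show ∑ i, α (Fin.castAdd d i) * y i = 0 from hy]
      · rw [card_eq_zero, filter_eq_empty_iff]
        intro z _ hz
        simp only [hα, zero_mul, sum_const_zero] at hz
        exact hy (neg_eq_zero.mp hz.symm)
    simp only [hfib, ← sum_filter, filter_filter, sum_const, smul_eq_mul]
    ring
  have hE := card_sum_mul_prod_zeros_of_hasProfile (J := Fin h) hs1
    (by rwa [Fintype.card_fin]) hsum (by rwa [Fintype.card_fin])
  rw [Fintype.card_fin] at hE
  rw [hbase]
  push_cast
  rw [hE, show h + d - 1 = d + (h - 1) by omega, pow_add]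
  ring

end Weights

section Transfer

variable {h d : ℕ}

theorem card_subtype_castAdd {p : Fin (h + d) → Prop} (hp : ∀ i, p i → (i : ℕ) < h) :
    Nat.card {i // p i} = Nat.card {i : Fin h // p (Fin.castAdd d i)} :=
  (Nat.card_congr
    { toFun := fun i => ⟨Fin.castAdd d i.1, i.2⟩
      invFun := fun i => ⟨⟨i.1, hp i.1 i.2⟩, i.2⟩
      left_inv := fun _ => rfl
      right_inv := fun _ => rfl }).symm

theorem card_zero_tail {F : Type*} [Zero F] (p : (Fin h → F) → Prop) :
    Nat.card {α : Fin (h + d) → F // (∀ i : Fin (h + d), h ≤ (i : ℕ) → α i = 0) ∧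
        p fun i => α (Fin.castAdd d i)} = Nat.card {a : Fin h → F // p a} :=
  Nat.card_congr
    { toFun := fun α => ⟨_, α.2.2⟩
      invFun := fun a => ⟨Fin.append a.1 0, by
        refine ⟨fun i => Fin.addCases (fun i hi => ?_) (fun i _ => by simp) i, by simpa using a.2⟩
        exact absurd hi (by simp)⟩
      left_inv := fun α => by
        ext i
        refine Fin.addCases (fun i => by simp) (fun i => ?_) i
        simp [α.2.1 (Fin.natAdd h i) (by simp)]
      right_inv := fun a => by simp }

theorem zero_tail_and_profile_iff {F : Type*} [Field F] {l t : ℕ} (r : Fin l → ℕ)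
    (α : Fin (h + d) → F) :
    ((∀ i : Fin (h + d), h ≤ (i : ℕ) → α i = 0) ∧
      Nat.card {i : Fin (h + d) // (i : ℕ) < h ∧ α i = 0} = t ∧
        ∃ β : Fin l → F, Function.Injective β ∧ (∀ m, β m ≠ 0) ∧
          (∀ i : Fin (h + d), α i ≠ 0 → ∃ m, α i = β m) ∧
            ∀ m, Nat.card {i : Fin (h + d) // α i = β m} = r m) ↔
    (∀ i : Fin (h + d), h ≤ (i : ℕ) → α i = 0) ∧
      ∃ β, HasProfile t r β fun i => α (Fin.castAdd d i) := by
  refine and_congr_right fun htail => ?_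
  have hlt : ∀ i : Fin (h + d), α i ≠ 0 → (i : ℕ) < h := fun i hi => by
    by_contra hge
    exact hi (htail i (not_lt.mp hge))
  rw [card_subtype_castAdd (fun i hi => hi.1), ← exists_and_left]
  simp only [Fin.val_castAdd, Fin.is_lt, true_and]
  refine exists_congr fun β => and_congr_right fun _ => and_congr_right fun _ =>
    and_congr_right fun h0 => and_congr ?_ (forall_congr' fun m => ?_)
  · exact ⟨fun hcov i hi => hcov _ hi, fun hcov i hi => hcov ⟨i, hlt i hi⟩ hi⟩
  · rw [card_subtype_castAdd fun i (hi : α i = β m) => hlt i (hi ▸ h0 m)]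

end Transfer

theorem stmt7 (q : ℕ) (F : Type*) [Field F] [Fintype F] (hF : Fintype.card F = q)
    (k h : ℕ) (hh : 4 ≤ h) (hhk : h < k)
    (D1 : Set (Fin k → F))
    (hD1 : D1 = {x | x ≠ 0 ∧
      (∑ i : Fin h, x (Fin.castLE hhk.le i)) * ∏ i : Fin h, x (Fin.castLE hhk.le i) = 0})
    (n : ℕ) (hn : n = Nat.card D1) :
    -- (i)
    (Nat.card {α : Fin k → F // ∃ i : Fin k, h ≤ (i : ℕ) ∧ α i ≠ 0} = q ^ k - q ^ h ∧
      ∀ α : Fin k → F, (∃ i : Fin k, h ≤ (i : ℕ) ∧ α i ≠ 0) →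
        (Nat.card {P : Fin k → F // P ∈ D1 ∧ ∑ i, α i * P i ≠ 0} : ℤ)
          = (n : ℤ) - (q : ℤ) ^ (k - h - 1) * ((q : ℤ) ^ h + psi q h - ((q : ℤ) - 1) ^ h) + 1)
    ∧
    -- (ii)
    (∀ s : ℕ, 1 ≤ s → s ≤ h →
      ∀ l : ℕ, ∀ r : Fin l → ℕ, (∀ m, 1 ≤ r m) → (∑ m, r m) = s →
      ∀ j : ℕ, ∀ ι : Fin j → ℕ,
        (∃ v : Fin j → ℕ, Function.Injective v ∧ (∀ m : Fin l, ∃ t, r m = v t) ∧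
            ∀ t, ι t = Nat.card {m : Fin l // r m = v t}) →
        (Nat.card {α : Fin k → F //
            (∀ i : Fin k, h ≤ (i : ℕ) → α i = 0) ∧
            Nat.card {i : Fin k // (i : ℕ) < h ∧ α i = 0} = h - s ∧
            ∃ β : Fin l → F, Function.Injective β ∧ (∀ m, β m ≠ 0) ∧
              (∀ i : Fin k, α i ≠ 0 → ∃ m, α i = β m) ∧
              ∀ m, Nat.card {i : Fin k // α i = β m} = r m}
          = Nat.choose h s * (Nat.factorial s / ∏ m, Nat.factorial (r m))
              * (Nat.factorial l / ∏ t, Nat.factorial (ι t)) * Nat.choose (q - 1) l) ∧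
        ∀ α : Fin k → F,
          ((∀ i : Fin k, h ≤ (i : ℕ) → α i = 0) ∧
            Nat.card {i : Fin k // (i : ℕ) < h ∧ α i = 0} = h - s ∧
            ∃ β : Fin l → F, Function.Injective β ∧ (∀ m, β m ≠ 0) ∧
              (∀ i : Fin k, α i ≠ 0 → ∃ m, α i = β m) ∧
              ∀ m, Nat.card {i : Fin k // α i = β m} = r m) →
          (Nat.card {P : Fin k → F // P ∈ D1 ∧ ∑ i, α i * P i ≠ 0} : ℤ)
            = (n : ℤ) - ((q : ℤ) ^ (k - 1)
                - ((q : ℤ) - 1) ^ (h - s) * (q : ℤ) ^ (k - h) * psi q s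
                + (q : ℤ) ^ (k - h) * Atup q (List.ofFn r ++ [h - s])) + 1) := by
  classical
  obtain ⟨d, rfl⟩ : ∃ d, k = h + d := ⟨k - h, by omega⟩
  subst hF hn hD1
  refine ⟨⟨?_, fun α hα => ?_⟩, fun s hs1 hs l r hr hsum j ι hι => ⟨?_, fun α hα => ?_⟩⟩
  · have hzero : Nat.card {α : Fin (h + d) → F // ∀ i : Fin (h + d), h ≤ (i : ℕ) → α i = 0}
        = Fintype.card F ^ h := by
      have htail := card_zero_tail (F := F) (h := h) (d := d) (fun _ => True)
      simp only [and_true] at htail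
      rw [htail, Nat.card_eq_fintype_card, Fintype.card_subtype]
      simp
    have hsplit := Fintype.card_subtype_compl
      (fun α : Fin (h + d) → F => ∀ i : Fin (h + d), h ≤ (i : ℕ) → α i = 0)
    rw [← Nat.card_eq_fintype_card (α := {α : Fin (h + d) → F // ∀ i : Fin (h + d), _}), hzero]
      at hsplit
    rw [Nat.card_eq_fintype_card]
    simpa using hsplit
  · obtain ⟨i, hi, hαi⟩ := hα
    have hi' : α (Fin.natAdd h ⟨i - h, by omega⟩) ≠ 0 := by
      convert hαi using 2
      ext
      simp [hi]
    have hz := card_zeros_of_tail_ne_zero α hi'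
    rw [show h + d - h - 1 = d - 1 by omega, ← hz]
    exact card_nonorthogonal_eq α
  · obtain ⟨v, hv, hrv, hιv⟩ := hι
    simp only [zero_tail_and_profile_iff]
    rw [card_zero_tail fun a => ∃ β, HasProfile (h - s) r β a, Nat.card_eq_fintype_card,
      Fintype.card_subtype]
    simpa using card_exists_hasProfile (F := F) (J := Fin h) (by simpa using hs) hr hsum hv hrv hιv
  · obtain ⟨htail, β, hprof⟩ := (zero_tail_and_profile_iff r α).mp hα
    have hz := card_zeros_of_hasProfile α (fun i => htail _ (by simp)) hs1 hs hsum hprof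
    rw [Nat.add_sub_cancel_left, ← hz]
    exact card_nonorthogonal_eq α
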